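/- arXiv:2105.06563 — 3 statements merged into one kernel-verified Lean document; each statement's English description precedes it below -/
import Mathlib

section
/- Let (Ω, ν) be a probability space, λ > 0, C₄ > 0, and let (g_n)_{n≥1} be a sequence of independent real-valued random variables on Ω such that for every n, g_n⁴ is integrable, E[g_n²] = λ²/n, and E[g_n⁴] ≤ C₄ λ⁴ n⁻². Then for ν-almost every ω, the series ∑_{n=1}^∞ g_n(ω)² diverges to infinity. -/
open MeasureTheory ProbabilityTheory Filter

/-!
Second moment method. Put `S k = ∑ n < k, g n ^ 2`. The means `E[S k]` grow like the harmonic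
series, whereas the variances stay bounded by `∑ E[g n ^ 4] < ∞`, so Chebyshev's inequality gives
`P(S k ≤ M) → 0` for every level `M`. As `S` is monotone in `k` and the event that it stays below
`M` forever lies in each `{S k ≤ M}`, almost surely every level is exceeded and `S k → ∞`.
-/

section SecondMoment

open Asymptotics Topology

variable {Ω : Type*} [MeasurableSpace Ω] {ν : Measure Ω}

theorem summable_const_div_nat_succ_pow_iff {c : ℝ} (hc : c ≠ 0) {p : ℕ} :
    Summable (fun n : ℕ => c / ((n : ℝ) + 1) ^ p) ↔ 1 < p := by
  have hshift : Summable (fun n : ℕ => (((n : ℝ) + 1) ^ p)⁻¹) ↔ 1 < p := by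
    rw [← Real.summable_nat_pow_inv, ← summable_nat_add_iff (f := fun n : ℕ => ((n : ℝ) ^ p)⁻¹) 1]
    simp only [Nat.cast_add, Nat.cast_one]
  simpa only [div_eq_mul_inv] using (summable_mul_left_iff hc).trans hshift

theorem isLittleO_sum_range_of_summable {E : Type*} [NormedAddCommGroup E] {v : ℕ → E} {a : ℕ → ℝ}
    (hv : Summable v) (ha : Tendsto a atTop atTop) :
    (fun k => ∑ n ∈ Finset.range k, v n) =o[atTop] a :=
  (hv.hasSum.tendsto_sum_nat.isBigO_one ℝ).trans_isLittleO
    (isLittleO_const_left.2 <| .inr <| tendsto_norm_atTop_atTop.comp ha)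

theorem memLp_two_of_nonneg_of_integrable_sq {f : Ω → ℝ} (hf : 0 ≤ᵐ[ν] f)
    (hint : Integrable (fun ω => f ω ^ 2) ν) : MemLp f 2 ν := by
  have hmeas : AEStronglyMeasurable f ν :=
    (Real.continuous_sqrt.comp_aestronglyMeasurable hint.aestronglyMeasurable).congr
      (hf.mono fun _ hω => Real.sqrt_sq hω)
  exact (memLp_two_iff_integrable_sq hmeas).2 hint

theorem memLp_two_sq_of_integrable_pow_four {f : Ω → ℝ}
    (hint : Integrable (fun ω => f ω ^ 4) ν) : MemLp (fun ω => f ω ^ 2) 2 ν :=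
  memLp_two_of_nonneg_of_integrable_sq (.of_forall fun ω => sq_nonneg (f ω)) <| by
    simpa only [← pow_mul] using hint

theorem variance_sum_le_sum_variance [IsFiniteMeasure ν] {ι : Type*} {X : ι → Ω → ℝ}
    {s : Finset ι} (hX : ∀ i ∈ s, MemLp (X i) 2 ν)
    (hcov : (s : Set ι).Pairwise fun i j => cov[X i, X j; ν] ≤ 0) :
    Var[fun ω => ∑ i ∈ s, X i ω; ν] ≤ ∑ i ∈ s, Var[X i; ν] := by
  classical
  rw [variance_fun_sum' hX]
  refine Finset.sum_le_sum fun i hi => ?_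
  rw [← Finset.add_sum_erase s _ hi, covariance_self (hX i hi).aemeasurable]
  refine add_le_of_nonpos_right (Finset.sum_nonpos fun j hj => ?_)
  exact hcov hi (Finset.mem_of_mem_erase hj) (Finset.ne_of_mem_erase hj).symm

theorem variance_sq_le_integral_pow_four [IsProbabilityMeasure ν] {f : Ω → ℝ}
    (hint : Integrable (fun ω => f ω ^ 4) ν) :
    Var[fun ω => f ω ^ 2; ν] ≤ ∫ ω, f ω ^ 4 ∂ν := by
  simpa only [Pi.pow_apply, ← pow_mul] using
    variance_le_expectation_sq (memLp_two_sq_of_integrable_pow_four hint).aestronglyMeasurable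

theorem covariance_sq_eq_zero_of_indepFun {f h : Ω → ℝ} (hindep : IndepFun f h ν)
    (hf : Integrable (fun ω => f ω ^ 4) ν) (hh : Integrable (fun ω => h ω ^ 4) ν) :
    cov[fun ω => f ω ^ 2, fun ω => h ω ^ 2; ν] = 0 :=
  (hindep.comp (measurable_id.pow_const 2) (measurable_id.pow_const 2)).covariance_eq_zero
    (memLp_two_sq_of_integrable_pow_four hf) (memLp_two_sq_of_integrable_pow_four hh)

theorem meas_le_le_variance_div_sq [IsFiniteMeasure ν] {X : Ω → ℝ} (hX : MemLp X 2 ν)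
    {M : ℝ} (hM : M < ∫ ω, X ω ∂ν) :
    ν {ω | X ω ≤ M} ≤ ENNReal.ofReal (Var[X; ν] / ((∫ ω, X ω ∂ν) - M) ^ 2) := by
  refine (measure_mono fun ω hω => ?_).trans (meas_ge_le_variance_div_sq hX (sub_pos.2 hM))
  calc (∫ ω, X ω ∂ν) - M ≤ (∫ ω, X ω ∂ν) - X ω := sub_le_sub_left hω _
    _ ≤ |X ω - ∫ ω, X ω ∂ν| := by rw [abs_sub_comm]; exact le_abs_self _

theorem tendsto_measure_le_of_variance_isLittleO [IsFiniteMeasure ν] {ι : Type*} {l : Filter ι}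
    {S : ι → Ω → ℝ} (hS : ∀ k, MemLp (S k) 2 ν)
    (hmean : Tendsto (fun k => ∫ ω, S k ω ∂ν) l atTop)
    (hvar : (fun k => Var[S k; ν]) =o[l] fun k => (∫ ω, S k ω ∂ν) ^ 2) (M : ℝ) :
    Tendsto (fun k => ν {ω | S k ω ≤ M}) l (𝓝 0) := by
  have hequiv : (fun k => (∫ ω, S k ω ∂ν) - M) ~[l] fun k => ∫ ω, S k ω ∂ν :=
    IsEquivalent.refl.sub_isLittleO
      (isLittleO_const_left.2 <| .inr <| tendsto_norm_atTop_atTop.comp hmean)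
  have hbound : Tendsto (fun k => ENNReal.ofReal (Var[S k; ν] / ((∫ ω, S k ω ∂ν) - M) ^ 2))
      l (𝓝 0) := by
    simpa only [ENNReal.ofReal_zero] using ENNReal.tendsto_ofReal
      (hvar.trans_isBigO (hequiv.symm.isBigO.pow 2)).tendsto_div_nhds_zero
  refine tendsto_of_tendsto_of_tendsto_of_le_of_le' tendsto_const_nhds hbound
    (.of_forall fun _ => zero_le) ?_
  filter_upwards [hmean.eventually_gt_atTop M] with k hk
  exact meas_le_le_variance_div_sq (hS k) hk

theorem ae_tendsto_atTop_of_monotone {ι β : Type*} [Preorder ι] [IsDirectedOrder ι] [Nonempty ι]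
    [LinearOrder β] [Nonempty β] [(atTop : Filter β).IsCountablyGenerated] {S : ι → Ω → β}
    (hmono : ∀ᵐ ω ∂ν, Monotone fun k => S k ω)
    (hS : ∀ M, Tendsto (fun k => ν {ω | S k ω ≤ M}) atTop (𝓝 0)) :
    ∀ᵐ ω ∂ν, Tendsto (fun k => S k ω) atTop atTop := by
  obtain ⟨u, hu⟩ := (atTop : Filter β).exists_seq_tendsto
  have hexceeds : ∀ᵐ ω ∂ν, ∀ n, ∃ k, u n < S k ω := by
    refine ae_all_iff.2 fun n => ae_iff.2 (le_antisymm ?_ zero_le)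
    refine ge_of_tendsto (hS (u n)) (.of_forall fun k => measure_mono fun ω hω => ?_)
    exact not_lt.1 (not_exists.1 hω k)
  filter_upwards [hmono, hexceeds] with ω hω hexceedsω
  refine tendsto_atTop_atTop_of_monotone hω fun b => ?_
  obtain ⟨n, hn⟩ := (hu.eventually_ge_atTop b).exists
  obtain ⟨k, hk⟩ := hexceedsω n
  exact ⟨k, hn.trans hk.le⟩

theorem ae_tendsto_sum_atTop_of_nonneg [IsFiniteMeasure ν] {X : ℕ → Ω → ℝ}
    (hnonneg : ∀ n, 0 ≤ᵐ[ν] X n) (hX : ∀ n, MemLp (X n) 2 ν)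
    (hcov : Pairwise fun i j => cov[X i, X j; ν] ≤ 0)
    (hmean : Tendsto (fun k => ∑ n ∈ Finset.range k, ∫ ω, X n ω ∂ν) atTop atTop)
    (hvar : (fun k => ∑ n ∈ Finset.range k, Var[X n; ν]) =o[atTop]
      fun k => (∑ n ∈ Finset.range k, ∫ ω, X n ω ∂ν) ^ 2) :
    ∀ᵐ ω ∂ν, Tendsto (fun k => ∑ n ∈ Finset.range k, X n ω) atTop atTop := by
  have hmono : ∀ᵐ ω ∂ν, Monotone fun k => ∑ n ∈ Finset.range k, X n ω := by
    filter_upwards [ae_all_iff.2 hnonneg] with ω hω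
    exact monotone_nat_of_le_succ fun k => by
      simpa only [Finset.sum_range_succ] using le_add_of_nonneg_right (hω k)
  have hmean_sum (k : ℕ) : ∫ ω, ∑ n ∈ Finset.range k, X n ω ∂ν =
      ∑ n ∈ Finset.range k, ∫ ω, X n ω ∂ν :=
    integral_finsetSum _ fun n _ => (hX n).integrable one_le_two
  have hvar_sum : (fun k => Var[fun ω => ∑ n ∈ Finset.range k, X n ω; ν]) =O[atTop]
      fun k => ∑ n ∈ Finset.range k, Var[X n; ν] :=
    .of_norm_le fun k => by
      rw [Real.norm_of_nonneg (variance_nonneg _ _)]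
      exact variance_sum_le_sum_variance (fun n _ => hX n) (hcov.set_pairwise _)
  refine ae_tendsto_atTop_of_monotone hmono (tendsto_measure_le_of_variance_isLittleO
    (fun k => memLp_finsetSum _ fun n _ => hX n) ?_ ?_)
  · simpa only [hmean_sum] using hmean
  · simpa only [hmean_sum] using hvar_sum.trans_isLittleO hvar

theorem stmt0_general [IsProbabilityMeasure ν] {g : ℕ → Ω → ℝ}
    (hint4 : ∀ n, Integrable (fun ω => g n ω ^ 4) ν)
    (hcov : Pairwise fun i j => cov[fun ω => g i ω ^ 2, fun ω => g j ω ^ 2; ν] ≤ 0)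
    (h2 : ¬ Summable fun n => ∫ ω, g n ω ^ 2 ∂ν)
    (h4 : Summable fun n => ∫ ω, g n ω ^ 4 ∂ν) :
    ∀ᵐ ω ∂ν, Tendsto (fun k => ∑ n ∈ Finset.range k, g n ω ^ 2) atTop atTop := by
  have hmean := (not_summable_iff_tendsto_nat_atTop_of_nonneg fun n =>
    integral_nonneg fun ω => sq_nonneg (g n ω)).1 h2
  have hvar : Summable fun n => Var[fun ω => g n ω ^ 2; ν] :=
    h4.of_nonneg_of_le (fun _ => variance_nonneg _ _) fun n =>
      variance_sq_le_integral_pow_four (hint4 n)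
  exact ae_tendsto_sum_atTop_of_nonneg (fun n => .of_forall fun ω => sq_nonneg (g n ω))
    (fun n => memLp_two_sq_of_integrable_pow_four (hint4 n)) hcov hmean
    (isLittleO_sum_range_of_summable hvar ((tendsto_pow_atTop two_ne_zero).comp hmean))

end SecondMoment

/-- If `(g n)` are independent real random variables on a probability space
`(Ω, ν)` with `g n ^ 4` integrable, `E[(g n)²] = λ²/n` and `E[(g n)⁴] ≤ C₄ λ⁴ n⁻²`
(indices `n ≥ 1`, here encoded as `n+1` for `n : ℕ`), then `ν`-a.s. the series
`∑ (g n ω)²` diverges to `+∞`. -/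
theorem stmt0
    {Ω : Type*} [MeasurableSpace Ω] (ν : Measure Ω) [IsProbabilityMeasure ν]
    (lam C₄ : ℝ) (hlam : 0 < lam) (hC₄ : 0 < C₄)
    (g : ℕ → Ω → ℝ)
    (hmeas : ∀ n, Measurable (g n))
    (hindep : iIndepFun g ν)
    (hint4 : ∀ n, Integrable (fun ω => (g n ω) ^ 4) ν)
    (hvar : ∀ n, ∫ ω, (g n ω) ^ 2 ∂ν = lam ^ 2 / ((n : ℝ) + 1))
    (h4 : ∀ n, ∫ ω, (g n ω) ^ 4 ∂ν ≤ C₄ * lam ^ 4 / ((n : ℝ) + 1) ^ 2) :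
    ∀ᵐ ω ∂ν, Tendsto (fun k => ∑ n ∈ Finset.range k, (g n ω) ^ 2) atTop atTop := by
  have h2_sum : ¬ Summable fun n => ∫ ω, g n ω ^ 2 ∂ν := by
    simpa only [hvar, pow_one] using
      (summable_const_div_nat_succ_pow_iff (pow_ne_zero 2 hlam.ne') (p := 1)).not.2 (lt_irrefl 1)
  have h4_sum : Summable fun n => ∫ ω, g n ω ^ 4 ∂ν :=
    ((summable_const_div_nat_succ_pow_iff (by positivity)).2 one_lt_two).of_nonneg_of_le
      (fun n => integral_nonneg fun ω => by positivity) h4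
  exact stmt0_general hint4 (fun i j hij => (covariance_sq_eq_zero_of_indepFun
    (hindep.indepFun hij) (hint4 i) (hint4 j)).le) h2_sum h4_sum
end

section
/- Let φ ∈ (0, π), g ∈ ℝ, R > 0, θ ∈ ℝ, and set η = g/(2 sin φ). Let p = iR e^{iθ} ∈ ℂ and define p' = p e^{iφ}(1 − iη) − iη e^{−iφ} p̄, where p̄ is the complex conjugate of p. Then |p'|² = R² ( 1 + (g/sin φ) · sin(2(θ + φ)) + (g²/sin²φ) · sin²(θ + φ) ). -/
open Complex

/-!
With `q = e^{iφ} p`, one Prüfer step sends `q` to `q (1 - iη) - iη q̄ = q - 2iη Re q`: the delta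
coupling acts on the freely rotated variable as a shear along the imaginary axis. Hence
`|p'|² = |q|² - 4η Re q Im q + 4η² (Re q)²`, and for `p = iR e^{iθ}` the coordinates of `q` are
`Re q = -R sin (θ + φ)` and `Im q = R cos (θ + φ)`.
-/

section PruferStep

open scoped ComplexConjugate

/-- One step of the Prüfer recursion: free rotation through the angle `φ`, followed by a delta
coupling. The parameter `η` is the reduced coupling `g / (2 sin φ)`, kept independent of `φ` so that
no division occurs. -/
noncomputable def pruferStep (φ η : ℝ) (p : ℂ) : ℂ :=
  p * exp (φ * I) * (1 - I * η) - I * η * exp (-(φ * I)) * conj p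

theorem conj_exp_ofReal_mul_I (x : ℝ) : conj (exp (x * I)) = exp (-(x * I)) := by
  rw [← exp_conj, map_mul, conj_ofReal, conj_I, mul_neg]

theorem norm_sub_ofReal_mul_I_sq (z : ℂ) (t : ℝ) :
    ‖z - t * I‖ ^ 2 = ‖z‖ ^ 2 - 2 * t * z.im + t ^ 2 := by
  simp only [Complex.sq_norm, normSq_apply, sub_re, sub_im, re_ofReal_mul, im_ofReal_mul, I_re,
    I_im]
  ring

theorem pruferStep_eq_shear (φ η : ℝ) (p : ℂ) :
    pruferStep φ η p = p * exp (φ * I) - (2 * η * (p * exp (φ * I)).re : ℝ) * I := by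
  have h_conj : exp (-(φ * I)) * conj p = conj (p * exp (φ * I)) := by
    rw [map_mul, conj_exp_ofReal_mul_I, mul_comm]
  rw [pruferStep, mul_assoc (I * η), h_conj]
  have h_re := add_conj (p * exp (φ * I))
  push_cast at h_re ⊢
  linear_combination (-(I * η)) * h_re

theorem norm_pruferStep_sq (φ η : ℝ) (p : ℂ) :
    ‖pruferStep φ η p‖ ^ 2 = ‖p‖ ^ 2
      - 4 * η * (p * exp (φ * I)).re * (p * exp (φ * I)).im
      + (2 * η * (p * exp (φ * I)).re) ^ 2 := by
  rw [pruferStep_eq_shear, norm_sub_ofReal_mul_I_sq, norm_mul, norm_exp_ofReal_mul_I, mul_one]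
  ring

theorem I_mul_ofReal_mul_exp_mul_exp (R θ φ : ℝ) :
    I * R * exp (θ * I) * exp (φ * I) = ⟨-(R * Real.sin (θ + φ)), R * Real.cos (θ + φ)⟩ := by
  rw [mul_assoc, ← exp_add, ← add_mul, ← ofReal_add]
  apply Complex.ext <;> simp [exp_ofReal_mul_I_re, exp_ofReal_mul_I_im, -ofReal_add]

theorem stmt8_general (φ η R θ : ℝ) :
    ‖pruferStep φ η (I * R * exp (θ * I))‖ ^ 2 =
      R ^ 2 * (1 + 2 * η * Real.sin (2 * (θ + φ)) + (2 * η) ^ 2 * Real.sin (θ + φ) ^ 2) := by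
  have h_norm : ‖I * R * exp (θ * I)‖ ^ 2 = R ^ 2 := by
    rw [norm_mul, norm_mul, norm_I, one_mul, norm_exp_ofReal_mul_I, mul_one, norm_real,
      Real.norm_eq_abs, sq_abs]
  rw [norm_pruferStep_sq, h_norm, I_mul_ofReal_mul_exp_mul_exp, Real.sin_two_mul]
  ring

end PruferStep

/-- one-step recurrence for the squared Prüfer radius. With
`φ ∈ (0, π)`, `g ∈ ℝ`, `R > 0`, `θ ∈ ℝ`, `η = g/(2 sin φ)`, `p = iR e^{iθ}` and
`p' = p e^{iφ}(1 - iη) - iη e^{-iφ} conj(p)`, one has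
`|p'|² = R² (1 + (g/sin φ) sin(2(θ+φ)) + (g²/sin²φ) sin²(θ+φ))`. -/
theorem stmt8 (φ g R θ : ℝ) (hφ : φ ∈ Set.Ioo 0 Real.pi) (hR : 0 < R) :
    let η : ℝ := g / (2 * Real.sin φ)
    let p : ℂ := Complex.I * (R : ℂ) * Complex.exp (θ * Complex.I)
    let p' : ℂ := p * Complex.exp (φ * Complex.I) * (1 - Complex.I * (η : ℂ)) -
      Complex.I * (η : ℂ) * Complex.exp (-(φ * Complex.I)) * (starRingEnd ℂ p)
    ‖p'‖ ^ 2 =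
      R ^ 2 * (1 + (g / Real.sin φ) * Real.sin (2 * (θ + φ)) +
        (g ^ 2 / (Real.sin φ) ^ 2) * (Real.sin (θ + φ)) ^ 2) := by
  intro η p p'
  have hη : 2 * η = g / Real.sin φ := by
    rw [mul_div_assoc', mul_div_mul_left _ _ two_ne_zero]
  rw [← hη, ← div_pow, ← hη]
  exact stmt8_general φ η R θ
end

section
/- Let φ ∈ (0, π), g ∈ ℝ, and set η = g/(2 sin φ). Let f₊ = (1, 1 − e^{−iφ}) and f₋ = (1, 1 − e^{iφ}) in ℂ², let M(φ) = [[2cos φ − 1, 1], [2cos φ − 2, 1]] and B(g) = [[1, 0], [g, 1]], both viewed as complex 2×2 matrices. Then for every p ∈ ℂ, B(g) M(φ) (p f₊ + p̄ f₋) = p' f₊ + p̄' f₋, where p' = e^{iφ}(1 − iη) p − iη e^{−iφ} p̄ and p̄, p̄' denote complex conjugates. -/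
open Matrix Complex

/-! Put `z = e^{iφ}` and `w = e^{-iφ}`. Since `z w = 1`, the matrix `M(φ)` multiplies
`f₊ = (1, 1 - w)` by `z` and `f₋ = (1, 1 - z)` by `w`. The delta adds `g` times the first coordinate
to the second one, that is, along `(0, 1)`; as `f₊ - f₋ = (0, z - w)`, writing `g = h (z - w)`,
which forces `h = -iη`, resolves this kick in the eigenbasis. All of this is polynomial algebra in
`z` and `w`, so the coefficients along `f₊` and `f₋` may be taken independent; for real data they
stay conjugate. -/

section CommRing

variable {R : Type*} [CommRing R]

/-- The free transfer matrix of trace `t`; the matrix `M(φ)` is the case `t = 2 cos φ`. -/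
def transferMatrix (t : R) : Matrix (Fin 2) (Fin 2) R :=
  !![t - 1, 1; t - 2, 1]

/-- The transfer matrix `B(g)` across a delta distribution of strength `g`. -/
def deltaMatrix (g : R) : Matrix (Fin 2) (Fin 2) R :=
  !![1, 0; g, 1]

/-- The eigenvector of the free transfer matrix, normalized to first coordinate `1`. It is indexed
by the inverse `w` of its eigenvalue, so `f₊` is the case `w = e^{-iφ}` and `f₋` the case
`w = e^{iφ}`. -/
def transferEigenvector (w : R) : Fin 2 → R :=
  ![1, 1 - w]

theorem transferMatrix_mulVec_transferEigenvector {z w : R} (hzw : z * w = 1) :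
    transferMatrix (z + w) *ᵥ transferEigenvector w = z • transferEigenvector w := by
  ext i
  fin_cases i
  · simp [transferMatrix, transferEigenvector]
  · suffices z + w - 2 + (1 - w) = z * (1 - w) by simpa [transferMatrix, transferEigenvector]
    linear_combination hzw

theorem deltaMatrix_mulVec_eq_add_smul_sub (h z w : R) (v : Fin 2 → R) :
    deltaMatrix (h * (z - w)) *ᵥ v =
      v + (h * v 0) • (transferEigenvector w - transferEigenvector z) := by
  ext i
  fin_cases i
  · simp [deltaMatrix, transferEigenvector, mulVec, dotProduct]
  · suffices h * (z - w) * v 0 + v 1 = v 1 + h * v 0 * (z - w) by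
      simpa [deltaMatrix, transferEigenvector, mulVec, dotProduct]
    ring

theorem deltaMatrix_mul_transferMatrix_mulVec {z w : R} (hzw : z * w = 1) (h p q : R) :
    (deltaMatrix (h * (z - w)) * transferMatrix (z + w)) *ᵥ
        (p • transferEigenvector w + q • transferEigenvector z) =
      (z * (1 + h) * p + h * w * q) • transferEigenvector w +
        (w * (1 - h) * q - h * z * p) • transferEigenvector z := by
  have free_step : transferMatrix (z + w) *ᵥ
      (p • transferEigenvector w + q • transferEigenvector z) =
        (p * z) • transferEigenvector w + (q * w) • transferEigenvector z := by
    have hwz : w * z = 1 := by rw [mul_comm, hzw]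
    have hz := transferMatrix_mulVec_transferEigenvector hwz
    rw [add_comm w z] at hz
    rw [mulVec_add, mulVec_smul, mulVec_smul, transferMatrix_mulVec_transferEigenvector hzw, hz,
      smul_smul, smul_smul]
  have first_coord : ((p * z) • transferEigenvector w + (q * w) • transferEigenvector z) 0 =
      p * z + q * w := by
    simp [transferEigenvector]
  rw [← mulVec_mulVec, free_step, deltaMatrix_mulVec_eq_add_smul_sub, first_coord]
  module

end CommRing

theorem stmt17_general {φ : ℂ} (hφ : sin φ ≠ 0) (g p q : ℂ) :
    let η := g / (2 * sin φ)
    let fplus := transferEigenvector (exp (-(φ * I)))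
    let fminus := transferEigenvector (exp (φ * I))
    (deltaMatrix g * transferMatrix (2 * cos φ)) *ᵥ (p • fplus + q • fminus) =
      (exp (φ * I) * (1 - I * η) * p - I * η * exp (-(φ * I)) * q) • fplus +
        (exp (-(φ * I)) * (1 + I * η) * q + I * η * exp (φ * I) * p) • fminus := by
  intro η fplus fminus
  have exp_mul_exp_neg : exp (φ * I) * exp (-(φ * I)) = 1 := by
    rw [← exp_add, add_neg_cancel, exp_zero]
  have trace_eq : 2 * cos φ = exp (φ * I) + exp (-(φ * I)) := by
    rw [two_cos, neg_mul]
  have strength_eq : g = -(I * η) * (exp (φ * I) - exp (-(φ * I))) := by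
    calc g = η * (2 * sin φ) := (div_mul_cancel₀ g (mul_ne_zero two_ne_zero hφ)).symm
      _ = -(I * η) * (exp (φ * I) - exp (-(φ * I))) := by
        rw [two_sin, neg_mul φ]
        ring
  rw [trace_eq, strength_eq, deltaMatrix_mul_transferMatrix_mulVec exp_mul_exp_neg]
  module

theorem conj_prufer_recursion (φ η : ℝ) (p : ℂ) :
    starRingEnd ℂ (exp (φ * I) * (1 - I * η) * p - I * η * exp (-(φ * I)) * starRingEnd ℂ p) =
      exp (-(φ * I)) * (1 + I * η) * starRingEnd ℂ p + I * η * exp (φ * I) * p := by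
  simp only [map_sub, map_mul, map_one, map_neg, ← exp_conj, conj_I, conj_ofReal, conj_conj,
    mul_neg, neg_neg]
  ring

/-- exact one-step Prüfer recursion. For `φ ∈ (0,π)`, `g ∈ ℝ`,
`η = g/(2 sin φ)`, the complex matrices `M(φ) = [[2cos φ - 1, 1], [2cos φ - 2, 1]]` and
`B(g) = [[1,0],[g,1]]`, the eigenvectors `f₊ = (1, 1 - e^{-iφ})`, `f₋ = (1, 1 - e^{iφ})`,
and every `p ∈ ℂ`, one has `B(g) M(φ) (p f₊ + p̄ f₋) = p' f₊ + p̄' f₋` with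
`p' = e^{iφ}(1 - iη) p - iη e^{-iφ} p̄`. -/
theorem stmt17 (φ g : ℝ) (hφ : φ ∈ Set.Ioo 0 Real.pi) (p : ℂ) :
    let η : ℝ := g / (2 * Real.sin φ)
    let fplus : Fin 2 → ℂ := ![1, 1 - Complex.exp (-(φ * Complex.I))]
    let fminus : Fin 2 → ℂ := ![1, 1 - Complex.exp (φ * Complex.I)]
    let Mφ : Matrix (Fin 2) (Fin 2) ℂ :=
      Matrix.of ![![2 * (Real.cos φ : ℂ) - 1, 1], ![2 * (Real.cos φ : ℂ) - 2, 1]]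
    let Bg : Matrix (Fin 2) (Fin 2) ℂ := Matrix.of ![![1, 0], ![(g : ℂ), 1]]
    let p' : ℂ := Complex.exp (φ * Complex.I) * (1 - Complex.I * (η : ℂ)) * p -
      Complex.I * (η : ℂ) * Complex.exp (-(φ * Complex.I)) * (starRingEnd ℂ p)
    (Bg * Mφ).mulVec (p • fplus + (starRingEnd ℂ p) • fminus) =
      p' • fplus + (starRingEnd ℂ p') • fminus := by
  intro η fplus fminus Mφ Bg p'
  have hsin : sin (φ : ℂ) ≠ 0 := mod_cast (Real.sin_pos_of_mem_Ioo hφ).ne'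
  rw [conj_prufer_recursion]
  push_cast [p', η, Mφ]
  exact stmt17_general hsin g p (starRingEnd ℂ p)
end
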